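/- (Helson) Let 𝓔 ⊆ L²(𝕋) be a nonzero closed subspace with z·𝓔 ⊆ 𝓔 and z·𝓔 ≠ 𝓔 (simply invariant). Then there exists F ∈ L²(𝕋) with |F(z)| = 1 for almost every z ∈ 𝕋 such that 𝓔 = F·H²(𝕋). -/

import Mathlib

open MeasureTheory Complex

noncomputable instance : Fact (0 < 2 * Real.pi) := ⟨by positivity⟩

section Helpers

open AddCircle

local notation "𝕋π" => AddCircle (2 * Real.pi)
local notation "μπ" => (AddCircle.haarAddCircle (T := 2 * Real.pi))
local notation "L2π" => Lp ℂ 2 (AddCircle.haarAddCircle (T := 2 * Real.pi))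

theorem helson_norm_fourier (n : ℤ) (θ : 𝕋π) : ‖fourier n θ‖ = 1 := by
  rw [fourier_apply]; exact Circle.norm_coe _

theorem helson_memLp_mul (u : 𝕋π → ℂ) (hu : AEStronglyMeasurable u μπ)
    (h1 : ∀ᵐ θ ∂μπ, ‖u θ‖ = 1) (g : L2π) : MemLp (fun θ => u θ * g θ) 2 μπ := by
  refine (Lp.memLp g).congr_norm (hu.mul (Lp.aestronglyMeasurable g)) ?_
  filter_upwards [h1] with θ h
  simp [h]

/-- multiplication by a unimodular function -/
noncomputable def helsonMul (u : 𝕋π → ℂ) (hu : AEStronglyMeasurable u μπ)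
    (h1 : ∀ᵐ θ ∂μπ, ‖u θ‖ = 1) : L2π →ₗᵢ[ℂ] L2π where
  toFun g := (helson_memLp_mul u hu h1 g).toLp _
  map_add' f g := by
    rw [← MemLp.toLp_add, MemLp.toLp_eq_toLp_iff]
    filter_upwards [Lp.coeFn_add f g] with θ h
    rw [Pi.add_apply, h, Pi.add_apply, mul_add]
  map_smul' c g := by
    rw [RingHom.id_apply, ← MemLp.toLp_const_smul, MemLp.toLp_eq_toLp_iff]
    filter_upwards [Lp.coeFn_smul c g] with θ h
    simp [h]; ring
  norm_map' g := by
    change ‖(helson_memLp_mul u hu h1 g).toLp _‖ = _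
    rw [Lp.norm_toLp, Lp.norm_def]
    congr 1
    apply eLpNorm_congr_norm_ae
    filter_upwards [h1] with θ h
    simp [h]

theorem helsonMul_coe (u : 𝕋π → ℂ) (hu : AEStronglyMeasurable u μπ)
    (h1 : ∀ᵐ θ ∂μπ, ‖u θ‖ = 1) (g : L2π) :
    helsonMul u hu h1 g =ᵐ[μπ] fun θ => u θ * g θ :=
  (helson_memLp_mul u hu h1 g).coeFn_toLp

/-- multiplication by `z ^ n` -/
noncomputable def helsonShift (n : ℤ) : L2π →ₗᵢ[ℂ] L2π :=
  helsonMul (fun θ => fourier n θ) (fourier n).continuous.aestronglyMeasurable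
    (Filter.Eventually.of_forall (helson_norm_fourier n))

theorem helsonShift_coe (n : ℤ) (g : L2π) :
    helsonShift n g =ᵐ[μπ] fun θ => fourier n θ * g θ := helsonMul_coe _ _ _ _

theorem helsonShift_add (m n : ℤ) (g : L2π) :
    helsonShift (m + n) g = helsonShift m (helsonShift n g) := by
  apply Lp.ext
  filter_upwards [helsonShift_coe (m + n) g, helsonShift_coe m (helsonShift n g),
    helsonShift_coe n g] with θ h1 h2 h3
  rw [h1, h2, h3, fourier_add, mul_assoc]

theorem helsonShift_zero (g : L2π) : helsonShift 0 g = g := by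
  apply Lp.ext
  filter_upwards [helsonShift_coe 0 g] with θ h1
  rw [h1, fourier_zero, one_mul]

theorem helson_inner_shift (n : ℤ) (f g : L2π) :
    inner ℂ f (helsonShift n g) = ∫ θ, fourier n θ * (g θ * (starRingEnd ℂ) (f θ)) ∂μπ := by
  rw [L2.inner_def]
  apply integral_congr_ae
  filter_upwards [helsonShift_coe n g] with θ h
  rw [h]; simp only [RCLike.inner_apply]; ring

theorem helson_inner_shift_left (n : ℤ) (f g : L2π) :
    inner ℂ (helsonShift n f) g = inner ℂ f (helsonShift (-n) g) := by
  rw [← (helsonShift n).inner_map_map f, ← helsonShift_add]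
  simp [helsonShift_zero]

theorem helson_measure_ext (μ ν : Measure 𝕋π) [IsFiniteMeasure μ] [IsFiniteMeasure ν]
    (h : ∀ n : ℤ, ∫ θ, fourier n θ ∂μ = ∫ θ, fourier n θ ∂ν) : μ = ν := by
  have key : ∀ φ : C(𝕋π, ℂ), ∫ θ, φ θ ∂μ = ∫ θ, φ θ ∂ν := by
    have cont : ∀ (ρ : Measure 𝕋π) [IsFiniteMeasure ρ],
        Continuous fun φ : C(𝕋π, ℂ) => ∫ θ, φ θ ∂ρ := by
      intro ρ _
      have := (continuous_integral (μ := ρ) (G := ℂ)).comp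
        (ContinuousMap.toLp (E := ℂ) 1 ρ ℂ).continuous
      convert this using 2 with φ
      exact integral_congr_ae (ContinuousMap.coeFn_toLp ρ φ).symm
    have int : ∀ (ρ : Measure 𝕋π) [IsFiniteMeasure ρ] (φ : C(𝕋π, ℂ)), Integrable φ ρ :=
      fun ρ _ φ => φ.continuous.integrable_of_hasCompactSupport
        (HasCompactSupport.of_compactSpace _)
    intro φ
    have hφ : φ ∈ closure (Submodule.span ℂ (Set.range (@fourier (2 * Real.pi))) : Set _) := by
      rw [← Submodule.topologicalClosure_coe, span_fourier_closure_eq_top]; trivial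
    have hcl : IsClosed {φ : C(𝕋π, ℂ) | ∫ θ, φ θ ∂μ = ∫ θ, φ θ ∂ν} :=
      isClosed_eq (cont μ) (cont ν)
    refine closure_minimal ?_ hcl hφ
    intro ψ hψ
    induction hψ using Submodule.span_induction with
    | mem x hx => obtain ⟨n, rfl⟩ := hx; exact h n
    | zero => simp
    | add x y _ _ hx hy =>
      simp only [Set.mem_ofPred_eq, ContinuousMap.add_apply] at *
      rw [integral_add (int μ x) (int μ y), integral_add (int ν x) (int ν y), hx, hy]
    | smul c x _ hx =>
      simp only [Set.mem_ofPred_eq, ContinuousMap.smul_apply] at *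
      rw [integral_smul, integral_smul, hx]
  apply ext_of_forall_integral_eq_of_IsFiniteMeasure
  intro f
  have := key ⟨fun θ => (f θ : ℂ), by fun_prop⟩
  simp only [ContinuousMap.coe_mk] at this
  rw [integral_complex_ofReal, integral_complex_ofReal] at this
  exact_mod_cast this

theorem helson_integral_fourier (n : ℤ) (hn : n ≠ 0) : ∫ θ, fourier n θ ∂μπ = 0 := by
  have := congrFun (fourierCoeff_fourier (T := 2 * Real.pi) n) 0
  simpa [fourierCoeff, Pi.single_apply, hn.symm] using this

theorem helson_unimodular (f : L2π) (hf : ‖f‖ = 1)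
    (h : ∀ n : ℤ, 0 < n → inner ℂ f (helsonShift n f) = 0) : ∀ᵐ θ ∂μπ, ‖f θ‖ = 1 := by
  have h' : ∀ n : ℤ, n ≠ 0 → inner ℂ f (helsonShift n f) = 0 := by
    intro n hn
    rcases lt_or_gt_of_ne hn with h0 | h0
    · have := h (-n) (by omega)
      rw [← helson_inner_shift_left] at this
      rw [← inner_conj_symm, this, map_zero]
    · exact h n h0
  have hmeas : AEMeasurable (fun θ => ‖f θ‖₊ ^ 2) μπ :=
    (Lp.aestronglyMeasurable f).aemeasurable.nnnorm.pow_const 2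
  have hI : ∀ g : 𝕋π → ℂ, ∫ θ, g θ ∂(Measure.withDensity μπ fun θ => ((‖f θ‖₊ ^ 2 : NNReal) : ENNReal))
      = ∫ θ, g θ * (f θ * (starRingEnd ℂ) (f θ)) ∂μπ := by
    intro g
    rw [integral_withDensity_eq_integral_smul₀ hmeas]
    congr 1; ext θ
    rw [Complex.mul_conj, Complex.normSq_eq_norm_sq, NNReal.smul_def, Complex.real_smul]
    push_cast; ring
  have hfin : ∫⁻ θ, ((‖f θ‖₊ ^ 2 : NNReal) : ENNReal) ∂μπ ≠ ⊤ := by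
    have := (Lp.memLp f).integrable_norm_pow (by norm_num)
    have := this.2.ne
    simpa [enorm_pow, enorm_norm, enorm_eq_nnnorm] using this
  haveI : IsFiniteMeasure (Measure.withDensity μπ fun θ => ((‖f θ‖₊ ^ 2 : NNReal) : ENNReal)) :=
    isFiniteMeasure_withDensity hfin
  have hμ : (Measure.withDensity μπ fun θ => ((‖f θ‖₊ ^ 2 : NNReal) : ENNReal)) = μπ := by
    apply helson_measure_ext
    intro n
    rw [hI, ← helson_inner_shift]
    by_cases hn : n = 0
    · subst hn
      rw [helsonShift_zero, inner_self_eq_norm_sq_to_K, hf]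
      simp
    · rw [h' n hn, helson_integral_fourier n hn]
  have h2 : (fun θ => ((‖f θ‖₊ ^ 2 : NNReal) : ENNReal)) =ᵐ[μπ] 1 := by
    refine (withDensity_eq_iff hmeas.coe_nnreal_ennreal aemeasurable_one hfin).1 ?_
    rw [hμ]; exact withDensity_one.symm
  filter_upwards [h2] with θ hθ
  have : ‖f θ‖₊ ^ 2 = 1 := by
    simp only [Pi.one_apply] at hθ
    exact_mod_cast hθ
  have h3 : ‖f θ‖ ^ 2 = 1 := by simpa using congrArg NNReal.toReal this
  nlinarith [norm_nonneg (f θ)]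

theorem helson_eq_zero (f g : L2π) (hf : ∀ᵐ θ ∂μπ, ‖f θ‖ = 1)
    (h : ∀ n : ℤ, inner ℂ f (helsonShift n g) = 0) : g = 0 := by
  have hm : AEStronglyMeasurable (fun θ => (starRingEnd ℂ) (f θ)) μπ :=
    Complex.continuous_conj.comp_aestronglyMeasurable (Lp.aestronglyMeasurable f)
  have h1 : ∀ᵐ θ ∂μπ, ‖(starRingEnd ℂ) (f θ)‖ = 1 := by
    filter_upwards [hf] with θ h; simpa using h
  have : helsonMul _ hm h1 g = 0 := by
    apply fourierBasis.repr.injective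
    ext n
    rw [fourierBasis_repr, map_zero]
    have := h (-n)
    rw [helson_inner_shift] at this
    rw [fourierCoeff]
    simp only [lp.coeFn_zero, Pi.zero_apply]
    rw [← this]
    apply integral_congr_ae
    filter_upwards [helsonMul_coe _ hm h1 g] with θ h
    rw [h, smul_eq_mul]; ring
  exact (helsonMul _ hm h1).injective (by rw [this, map_zero])

end Helpers

/-- Helson's theorem: a nonzero simply invariant closed subspace `𝓔` of `L²(𝕋)`
(i.e. `z·𝓔 ⊆ 𝓔` and `z·𝓔 ≠ 𝓔`) is of the form `F·H²(𝕋)` for a unimodular `F`,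
where `F·H²(𝕋)` is the closed span of the functions `F·zⁿ`, `n ≥ 0`. -/
theorem helson_simply_invariant
    (𝓔 : Submodule ℂ (Lp ℂ 2 (AddCircle.haarAddCircle (T := 2 * Real.pi))))
    (hclosed : IsClosed (𝓔 : Set (Lp ℂ 2 (AddCircle.haarAddCircle (T := 2 * Real.pi)))))
    (hne : 𝓔 ≠ ⊥)
    (hinv : ∀ g ∈ 𝓔, ∀ h : Lp ℂ 2 (AddCircle.haarAddCircle (T := 2 * Real.pi)),
      (⇑h =ᵐ[AddCircle.haarAddCircle] fun θ => fourier (1 : ℤ) θ * g θ) → h ∈ 𝓔)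
    (hsimply : ¬ ∀ g ∈ 𝓔, ∃ g' ∈ 𝓔,
      ⇑g =ᵐ[AddCircle.haarAddCircle] fun θ => fourier (1 : ℤ) θ * g' θ) :
    ∃ F : AddCircle (2 * Real.pi) → ℂ,
      AEStronglyMeasurable F (AddCircle.haarAddCircle)
      ∧ (∀ᵐ θ ∂(AddCircle.haarAddCircle), ‖F θ‖ = 1)
      ∧ (𝓔 : Set (Lp ℂ 2 (AddCircle.haarAddCircle (T := 2 * Real.pi))))
          = closure (Submodule.span ℂ
              {k : Lp ℂ 2 (AddCircle.haarAddCircle (T := 2 * Real.pi)) |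
                ∃ n : ℕ, ⇑k =ᵐ[AddCircle.haarAddCircle] fun θ => F θ * fourier (n : ℤ) θ}
            : Set (Lp ℂ 2 (AddCircle.haarAddCircle (T := 2 * Real.pi)))) := by
  have hU : ∀ g ∈ 𝓔, helsonShift 1 g ∈ 𝓔 := fun g hg => hinv g hg _ (helsonShift_coe 1 g)
  have hUn : ∀ n : ℕ, ∀ g ∈ 𝓔, helsonShift n g ∈ 𝓔 := by
    intro n
    induction n with
    | zero => intro g hg; simpa [helsonShift_zero] using hg
    | succ n ih =>
      intro g hg
      push_cast
      rw [helsonShift_add]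
      exact ih _ (hU g hg)
  haveI : CompleteSpace 𝓔 := hclosed.completeSpace_coe
  set K := 𝓔.map (helsonShift 1).toLinearMap with hK
  haveI : CompleteSpace K := by
    have : IsClosed (K : Set (Lp ℂ 2 (AddCircle.haarAddCircle (T := 2 * Real.pi)))) := by
      rw [hK, Submodule.map_coe]
      exact (helsonShift 1).isometry.isClosedEmbedding.isClosedMap _ hclosed
    exact this.completeSpace_coe
  have hKE : K ≤ 𝓔 := by
    rintro _ ⟨g, hg, rfl⟩
    exact hU g hg
  obtain ⟨f, hfE, hfK, hf1⟩ : ∃ f ∈ 𝓔, f ∈ Kᗮ ∧ ‖f‖ = 1 := by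
    have hex : ∃ f ∈ 𝓔, f ∈ Kᗮ ∧ f ≠ 0 := by
      by_contra! hcon
      apply hsimply
      intro g hg
      have h0 := hcon (g - K.starProjection g)
        (𝓔.sub_mem hg (hKE (K.starProjection_apply_mem g)))
        (K.sub_starProjection_mem_orthogonal g)
      have hgK : g ∈ K := by
        rw [sub_eq_zero.mp h0]; exact K.starProjection_apply_mem g
      obtain ⟨g', hg', rfl⟩ := hgK
      exact ⟨g', hg', helsonShift_coe 1 g'⟩
    obtain ⟨f, h1, h2, h3⟩ := hex
    refine ⟨((‖f‖⁻¹ : ℝ) : ℂ) • f, 𝓔.smul_mem _ h1, Kᗮ.smul_mem _ h2, ?_⟩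
    rw [norm_smul]
    simp [h3]
  have horth : ∀ g ∈ 𝓔, ∀ n : ℤ, 0 < n → inner ℂ f (helsonShift n g) = 0 := by
    intro g hg n hn
    obtain ⟨m, rfl⟩ : ∃ m : ℕ, n = 1 + (m : ℤ) := ⟨(n - 1).toNat, by omega⟩
    rw [helsonShift_add]
    exact (Submodule.mem_orthogonal' _ _).1 hfK _ ⟨_, hUn m g hg, rfl⟩
  have huni := helson_unimodular f hf1 (horth f hfE)
  refine ⟨f, Lp.aestronglyMeasurable f, huni, ?_⟩
  rw [← Submodule.topologicalClosure_coe]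
  congr 1
  set S := {k : Lp ℂ 2 (AddCircle.haarAddCircle (T := 2 * Real.pi)) |
    ∃ n : ℕ, ⇑k =ᵐ[AddCircle.haarAddCircle] fun θ => f θ * fourier (n : ℤ) θ} with hS
  have hle : (Submodule.span ℂ S).topologicalClosure ≤ 𝓔 := by
    apply Submodule.topologicalClosure_minimal _ _ hclosed
    rw [Submodule.span_le]
    rintro k ⟨n, hk⟩
    have : k = helsonShift n f := by
      apply Lp.ext
      filter_upwards [hk, helsonShift_coe n f] with θ h1 h2
      rw [h1, h2, mul_comm]
    rw [this]
    exact hUn n f hfE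
  haveI : CompleteSpace (Submodule.span ℂ S).topologicalClosure :=
    (Submodule.isClosed_topologicalClosure _).completeSpace_coe
  have hsup := Submodule.sup_orthogonal_inf_of_hasOrthogonalProjection hle
  have hbot : (Submodule.span ℂ S).topologicalClosureᗮ ⊓ 𝓔 = ⊥ := by
    rw [eq_bot_iff]
    rintro g ⟨hg1, hg2⟩
    rw [Submodule.mem_bot]
    apply helson_eq_zero f g huni
    intro n
    rcases lt_or_ge 0 n with hn | hn
    · exact horth g hg2 n hn
    · obtain ⟨m, rfl⟩ : ∃ m : ℕ, n = -(m : ℤ) := ⟨(-n).toNat, by omega⟩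
      rw [← helson_inner_shift_left]
      refine (Submodule.mem_orthogonal _ _).1 hg1 _ ?_
      apply Submodule.le_topologicalClosure
      apply Submodule.subset_span
      refine ⟨m, ?_⟩
      filter_upwards [helsonShift_coe m f] with θ h2
      rw [h2, mul_comm]
  rw [hbot, sup_bot_eq] at hsup
  exact hsup.symm
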